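/- arXiv:1304.2456 — 2 statements merged into one kernel-verified Lean document; each statement's English description precedes it below -/
import Mathlib

section
/- For every t ≥ 0 one has ∫_0^t X(s) ds = η(λ,t)·X(0) + ∫_0^t e^{−λ(t−s)} Z(s) ds, where η(λ,u) := λ⁻¹(1 − e^{−λu}). -/
open MeasureTheory

/-!
The integrated process `F t = ∫ s in a..t, X s` is absolutely continuous and solves the linear
equation `F' = -k F + (x₀ + Z)` almost everywhere, so variation of constants expresses `F` through
`x₀` and `Z` alone. The integrating factor is `s ↦ exp (-k (t - s))`, and the fundamental theorem of
calculus for absolutely continuous functions is what allows `X` to be merely integrable.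
-/

section

open Set

variable {E : Type*} [NormedAddCommGroup E] [NormedSpace ℝ E]

theorem absolutelyContinuousOnInterval_of_dist_le {M N : Type*} [PseudoMetricSpace M]
    [PseudoMetricSpace N] {f : ℝ → M} {g : ℝ → N} {a b : ℝ}
    (hg : AbsolutelyContinuousOnInterval g a b)
    (hfg : ∀ x ∈ uIcc a b, ∀ y ∈ uIcc a b, dist (f x) (f y) ≤ dist (g x) (g y)) :
    AbsolutelyContinuousOnInterval f a b := by
  rw [absolutelyContinuousOnInterval_iff] at hg ⊢
  intro ε hε
  obtain ⟨δ, hδ, hgδ⟩ := hg ε hε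
  refine ⟨δ, hδ, fun I hI hIδ ↦ (Finset.sum_le_sum fun i hi ↦ ?_).trans_lt (hgδ I hI hIδ)⟩
  exact hfg _ (hI.1 i hi).1 _ (hI.1 i hi).2

theorem absolutelyContinuousOnInterval_integral {f : ℝ → E} {a b : ℝ}
    (hf : IntervalIntegrable f volume a b) :
    AbsolutelyContinuousOnInterval (fun x ↦ ∫ s in a..x, f s) a b := by
  have integrable_to : ∀ x ∈ uIcc a b, IntervalIntegrable f volume a x := fun x hx ↦
    hf.mono_set (uIcc_subset_uIcc_left hx)
  refine absolutelyContinuousOnInterval_of_dist_le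
    (hf.norm.absolutelyContinuousOnInterval_intervalIntegral left_mem_uIcc) fun x hx y hy ↦ ?_
  rw [dist_eq_norm, dist_eq_norm,
    intervalIntegral.integral_interval_sub_left (integrable_to x hx) (integrable_to y hy),
    intervalIntegral.integral_interval_sub_left (integrable_to x hx).norm (integrable_to y hy).norm]
  exact intervalIntegral.norm_integral_le_abs_integral_norm

theorem integral_eq_sub_of_ae_hasDerivAt [CompleteSpace E] {f f' : ℝ → E} {a b : ℝ}
    (hf : AbsolutelyContinuousOnInterval f a b) (hf' : IntervalIntegrable f' volume a b)
    (hderiv : ∀ᵐ x, x ∈ uIcc a b → HasDerivAt f (f' x) x) :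
    ∫ x in a..b, f' x = f b - f a := by
  have hdiff : ∀ᵐ x, x ∈ uIcc a b → HasDerivAt (fun y ↦ f y - ∫ s in a..y, f' s) 0 x := by
    filter_upwards [hderiv, hf'.ae_hasDerivAt_integral] with x hfx hintx hx
    simpa only [sub_self] using (hfx hx).fun_sub (hintx hx a left_mem_uIcc)
  obtain ⟨c, hc⟩ := (hf.fun_sub
    (absolutelyContinuousOnInterval_integral hf')).const_of_ae_hasDerivAt_zero hdiff
  have hab : f a = f b - ∫ s in a..b, f' s := by
    simpa only [intervalIntegral.integral_same, sub_zero] using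
      (hc a left_mem_uIcc).trans (hc b right_mem_uIcc).symm
  rw [hab, sub_sub_cancel]

theorem hasDerivAt_exp_neg_mul_sub (k b s : ℝ) :
    HasDerivAt (fun x ↦ Real.exp (-k * (b - x))) (k * Real.exp (-k * (b - s))) s := by
  convert (((hasDerivAt_id' s).const_sub b).const_mul (-k)).exp using 1
  ring

theorem integral_exp_neg_mul_sub {k : ℝ} (hk : k ≠ 0) (a b : ℝ) :
    ∫ s in a..b, Real.exp (-k * (b - s)) = k⁻¹ * (1 - Real.exp (-k * (b - a))) := by
  have h := intervalIntegral.integral_eq_sub_of_hasDerivAt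
    (fun s _ ↦ hasDerivAt_exp_neg_mul_sub k b s)
    (Continuous.intervalIntegrable (by fun_prop) a b)
  rw [intervalIntegral.integral_const_mul, sub_self, mul_zero, Real.exp_zero] at h
  rw [← h, inv_mul_cancel_left₀ hk]

theorem eq_exp_smul_add_integral_of_ae_hasDerivAt [CompleteSpace E] {k a b : ℝ} {F h : ℝ → E}
    (hF : AbsolutelyContinuousOnInterval F a b) (hh : IntervalIntegrable h volume a b)
    (hderiv : ∀ᵐ s, s ∈ uIcc a b → HasDerivAt F (h s - k • F s) s) :
    F b = Real.exp (-k * (b - a)) • F a + ∫ s in a..b, Real.exp (-k * (b - s)) • h s := by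
  set u : ℝ → ℝ := fun s ↦ Real.exp (-k * (b - s)) with hu
  have hu_contDiff : ContDiff ℝ 1 u := by fun_prop
  have huF_deriv : ∀ᵐ s, s ∈ uIcc a b → HasDerivAt (fun x ↦ u x • F x) (u s • h s) s := by
    filter_upwards [hderiv] with s hFs hs
    convert (hasDerivAt_exp_neg_mul_sub k b s).fun_smul (hFs hs) using 1
    module
  have huF_integral : ∫ s in a..b, u s • h s = u b • F b - u a • F a :=
    integral_eq_sub_of_ae_hasDerivAt
      (hu_contDiff.contDiffOn.absolutelyContinuousOnInterval.fun_smul hF)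
      (hh.continuousOn_smul hu_contDiff.continuous.continuousOn) huF_deriv
  have hub : u b = 1 := by simp [hu]
  rw [huF_integral, hub, one_smul, add_sub_cancel]

theorem integrated_OU_representation_general [CompleteSpace E] {k a t : ℝ} {x₀ : E} {X Z : ℝ → E}
    (hX : IntervalIntegrable X volume a t)
    (hXZ : ∀ᵐ s, s ∈ uIcc a t → X s = x₀ - k • (∫ r in a..s, X r) + Z s) :
    ∫ s in a..t, X s = (∫ s in a..t, Real.exp (-k * (t - s))) • x₀ +
      ∫ s in a..t, Real.exp (-k * (t - s)) • Z s := by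
  have hF := absolutelyContinuousOnInterval_integral hX
  have forcing_eq : ∀ᵐ s, s ∈ uIcc a t → X s + k • (∫ r in a..s, X r) = x₀ + Z s := by
    filter_upwards [hXZ] with s hs hmem
    rw [hs hmem]
    abel
  have hforcing : IntervalIntegrable (fun s ↦ x₀ + Z s) volume a t :=
    (hX.add (hF.continuousOn.intervalIntegrable.smul k)).congr_ae <|
      (ae_restrict_iff' measurableSet_uIoc).2 <|
        forcing_eq.mono fun s hs hmem ↦ hs (uIoc_subset_uIcc hmem)
  have hderiv : ∀ᵐ s, s ∈ uIcc a t →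
      HasDerivAt (fun x ↦ ∫ r in a..x, X r) (x₀ + Z s - k • ∫ r in a..s, X r) s := by
    filter_upwards [hX.ae_hasDerivAt_integral, forcing_eq] with s hs hforce hmem
    rw [← hforce hmem, add_sub_cancel_right]
    exact hs hmem a left_mem_uIcc
  have hexp : Continuous fun s ↦ Real.exp (-k * (t - s)) := by fun_prop
  have hZ : IntervalIntegrable Z volume a t := by
    simpa only [add_sub_cancel_left] using hforcing.sub (intervalIntegrable_const (c := x₀))
  calc ∫ s in a..t, X s = ∫ s in a..t, Real.exp (-k * (t - s)) • (x₀ + Z s) := by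
        simpa only [intervalIntegral.integral_same, smul_zero, zero_add] using
          eq_exp_smul_add_integral_of_ae_hasDerivAt hF hforcing hderiv
    _ = _ := by
        simp only [smul_add]
        rw [intervalIntegral.integral_add
            (Continuous.intervalIntegrable (by fun_prop) a t)
            (hZ.continuousOn_smul hexp.continuousOn),
          intervalIntegral.integral_smul_const]

end

/-- For the OU-type equation `X t = X 0 - λ ∫_0^t X + Z t`,
`∫_0^t X = η(λ,t) X 0 + ∫_0^t e^{-λ(t-s)} Z s ds`, where
`η(λ,u) = λ⁻¹ (1 - e^{-λ u})`. -/
theorem integrated_OU_representation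
    (lam γ β ρ : ℝ) (hlam : 0 < lam)
    (X Z : ℝ → ℝ)
    (hXmeas : Measurable X) (hZmeas : Measurable Z)
    (hXint : ∀ T : ℝ, IntervalIntegrable X volume 0 T)
    (hZint : ∀ T : ℝ, IntervalIntegrable Z volume 0 T)
    (hZ0 : Z 0 = 0)
    (hX : ∀ t : ℝ, 0 ≤ t → X t = X 0 - lam * (∫ s in (0:ℝ)..t, X s) + Z t)
    (Y : ℝ → ℝ)
    (hY : ∀ t : ℝ, Y t = (∫ s in (0:ℝ)..t, (γ + β * X s)) + ρ * Z t)
    (eta : ℝ → ℝ → ℝ)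
    (heta : ∀ u : ℝ, 0 ≤ u → eta lam u = lam⁻¹ * (1 - Real.exp (-lam * u)))
    (t : ℝ) (ht : 0 ≤ t) :
    (∫ s in (0:ℝ)..t, X s)
      = eta lam t * X 0 + ∫ s in (0:ℝ)..t, Real.exp (-lam * (t - s)) * Z s := by
  have heta_integral : eta lam t = ∫ s in (0:ℝ)..t, Real.exp (-lam * (t - s)) := by
    rw [heta t ht, integral_exp_neg_mul_sub hlam.ne', sub_zero]
  rw [heta_integral]
  exact integrated_OU_representation_general (hXint t) <| ae_of_all _ fun s hs ↦
    hX s (Set.uIcc_of_le ht ▸ hs).1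
end

section
/- For every λ > 0, T > 0, ρ, β ∈ ℝ and integer r ≥ 0, T^{−1}·∫_0^T (ρ + β·η(λ,v))^r dv = Σ_{j=0}^{r} C(r,j)·ρ^{r−j}·β^{j}·M_T(j), where C(r,j) denotes the binomial coefficient. -/
open MeasureTheory

/-- `η(λ,u) = λ⁻¹ (1 - e^{-λu})`. -/
noncomputable def eta (lam u : ℝ) : ℝ := lam⁻¹ * (1 - Real.exp (-lam * u))

/-- `M_T(0) = 1` and, for `j ≥ 1`,
`M_T(j) = λ^{-j} - T⁻¹ λ^{-(j+1)} Σ_{k=1}^{j} k⁻¹ (λ η(λ,T))^k`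
(the formula below also gives `1` at `j = 0` since the sum is then empty). -/
noncomputable def MM (lam T : ℝ) (j : ℕ) : ℝ :=
  lam ^ (-(j : ℤ)) - T⁻¹ * lam ^ (-(j : ℤ) - 1) *
    ∑ k ∈ Finset.Icc 1 j, (k : ℝ)⁻¹ * (lam * eta lam T) ^ k

/-!
`η = η(λ,·)` solves `η' = 1 - λη` with `η(0) = 0`. Multiplying by `η ^ n` and integrating gives
`λ ∫ η ^ (n+1) = ∫ η ^ n - η(T) ^ (n+1) / (n+1)`, which after division by `T` is the recursion
satisfied by `M_T`; hence `M_T(j)` is the mean of `η ^ j` over `[0, T]`, and the binomial theorem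
does the rest.
-/

section IntervalIntegral

variable {𝕜 : Type*} [RCLike 𝕜] {f : ℝ → 𝕜} {a b : ℝ}

theorem intervalIntegral_add_mul_pow {μ : Measure ℝ} {n : ℕ}
    (hf : ∀ j ∈ Finset.range (n + 1), IntervalIntegrable (fun v => f v ^ j) μ a b) (x y : 𝕜) :
    ∫ v in a..b, (x + y * f v) ^ n ∂μ
      = ∑ j ∈ Finset.range (n + 1),
          (n.choose j : 𝕜) * x ^ (n - j) * y ^ j * ∫ v in a..b, f v ^ j ∂μ := by
  have expand (v : ℝ) : (x + y * f v) ^ n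
      = ∑ j ∈ Finset.range (n + 1), (n.choose j : 𝕜) * x ^ (n - j) * y ^ j * f v ^ j := by
    rw [add_comm, add_pow]
    exact Finset.sum_congr rfl fun j _ => by ring
  simp_rw [expand]
  rw [intervalIntegral.integral_finsetSum fun j hj => (hf j hj).const_mul _]
  simp_rw [intervalIntegral.integral_const_mul]

theorem mul_intervalIntegral_pow_succ_of_hasDerivAt {c d : 𝕜}
    (hf : ∀ v ∈ Set.uIcc a b, HasDerivAt f (d - c * f v) v) (n : ℕ) :
    c * ∫ v in a..b, f v ^ (n + 1)
      = d * (∫ v in a..b, f v ^ n) - (f b ^ (n + 1) - f a ^ (n + 1)) / (n + 1) := by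
  have hcont : ContinuousOn f (Set.uIcc a b) := HasDerivAt.continuousOn hf
  have hint (m : ℕ) (z : 𝕜) : IntervalIntegrable (fun v => z * f v ^ m) volume a b :=
    (continuousOn_const.mul (hcont.pow m)).intervalIntegrable
  have hderiv : ∀ v ∈ Set.uIcc a b,
      HasDerivAt (fun v => f v ^ (n + 1) / (n + 1)) (d * f v ^ n - c * f v ^ (n + 1)) v := by
    intro v hv
    have hn : (n + 1 : 𝕜) ≠ 0 := n.cast_add_one_ne_zero
    refine (((hf v hv).pow (n + 1)).div_const _).congr_deriv ?_
    push_cast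
    field_simp
    ring
  have ftc := intervalIntegral.integral_eq_sub_of_hasDerivAt hderiv
    ((hint n d).sub (hint (n + 1) c))
  rw [intervalIntegral.integral_sub (hint n d) (hint (n + 1) c),
    intervalIntegral.integral_const_mul, intervalIntegral.integral_const_mul] at ftc
  linear_combination -ftc

end IntervalIntegral

theorem eta_zero_right (lam : ℝ) : eta lam 0 = 0 := by
  simp [eta]

theorem continuous_eta (lam : ℝ) : Continuous (eta lam) := by
  unfold eta
  fun_prop

theorem MM_zero (lam T : ℝ) : MM lam T 0 = 1 := by
  simp [MM]

theorem hasDerivAt_eta {lam : ℝ} (hlam : lam ≠ 0) (u : ℝ) :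
    HasDerivAt (eta lam) (1 - lam * eta lam u) u := by
  have hexp : HasDerivAt (fun u => Real.exp (-lam * u)) (Real.exp (-lam * u) * -lam) u :=
    (hasDerivAt_const_mul (-lam)).exp
  refine ((hexp.const_sub 1).const_mul lam⁻¹).congr_deriv ?_
  rw [eta]
  field_simp
  ring

theorem mul_MM_succ {lam : ℝ} (hlam : lam ≠ 0) (T : ℝ) (j : ℕ) :
    lam * MM lam T (j + 1) = MM lam T j - T⁻¹ * (eta lam T ^ (j + 1) / (j + 1)) := by
  simp only [MM, Finset.sum_Icc_succ_top (Nat.le_add_left 1 j), mul_pow, zpow_sub₀ hlam, zpow_neg,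
    zpow_natCast, zpow_one, pow_succ lam j]
  push_cast
  field_simp
  ring

theorem inv_mul_integral_eta_pow {lam T : ℝ} (hlam : lam ≠ 0) (hT : T ≠ 0) (j : ℕ) :
    T⁻¹ * ∫ v in (0 : ℝ)..T, eta lam v ^ j = MM lam T j := by
  induction j with
  | zero => simp [MM_zero, hT]
  | succ n ih =>
    have hrec := mul_intervalIntegral_pow_succ_of_hasDerivAt
      (fun v (_ : v ∈ Set.uIcc 0 T) => hasDerivAt_eta hlam v) n
    rw [eta_zero_right, zero_pow n.succ_ne_zero, sub_zero, one_mul] at hrec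
    refine mul_left_cancel₀ hlam ?_
    rw [mul_MM_succ hlam, ← ih]
    linear_combination T⁻¹ * hrec

theorem integral_binom_eta_pow_general {lam T : ℝ} (hlam : lam ≠ 0) (hT : T ≠ 0) (ρ β : ℝ)
    (r : ℕ) :
    T⁻¹ * (∫ v in (0 : ℝ)..T, (ρ + β * eta lam v) ^ r)
      = ∑ j ∈ Finset.range (r + 1),
          (r.choose j : ℝ) * ρ ^ (r - j) * β ^ j * MM lam T j := by
  rw [intervalIntegral_add_mul_pow
    fun j _ => ((continuous_eta lam).pow j).intervalIntegrable 0 T, Finset.mul_sum]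
  refine Finset.sum_congr rfl fun j _ => ?_
  rw [← inv_mul_integral_eta_pow hlam hT, mul_left_comm]

/-- For `λ > 0`, `T > 0`, `ρ, β ∈ ℝ` and integers `r ≥ 0`,
`T⁻¹ ∫_0^T (ρ + β η(λ,v))^r dv = Σ_{j=0}^r C(r,j) ρ^{r-j} β^j M_T(j)`. -/
theorem integral_binom_eta_pow (lam T ρ β : ℝ) (hlam : 0 < lam) (hT : 0 < T)
    (r : ℕ) :
    T⁻¹ * (∫ v in (0:ℝ)..T, (ρ + β * eta lam v) ^ r)
      = ∑ j ∈ Finset.range (r + 1),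
          (r.choose j : ℝ) * ρ ^ (r - j) * β ^ j * MM lam T j :=
  integral_binom_eta_pow_general hlam.ne' hT.ne' ρ β r
end
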